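/- Suppose β>0 is such that f_0(t) > β for every t ∈ (0,1/2). Then (1/3,1/3) is the unique critical point of F_β in Ξ°, and it is the strict global minimum of F_β on the closed simplex Ξ: F_β(1/3,1/3) = 0 and F_β(x) > 0 for every x ∈ Ξ with x ≠ (1/3,1/3). -/

import Mathlib

/-!
Writing `x₀ = 1 - x₁ - x₂`, the quadratic part is `|ψ(x)|² = a² + b² - ab` with `a = x₁ - x₀`,
`b = x₂ - x₀`, so the critical point equations say that `log xᵢ - (3β/2) xᵢ` takes the same value
for `i = 0, 1, 2`. The function `t ↦ log t - (3β/2) t` is strictly concave, hence takes no value at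
three distinct points (`two_eq_of_level`), so two of the coordinates equal a common `t ∈ (0, 1/2)`
and the third one is `1 - 2t`. If `t ≠ 1/3`, the remaining equation is `f₀(t) = β`, which is
excluded by hypothesis (`eq_third_of_pair`). This gives uniqueness (`eq_center_of_fderiv`).

For the global minimum, `F_β` attains its minimum over the compact simplex. A minimizer is not on
the boundary: moving from a boundary point by a proportion `s` towards the centre, convexity of
`t log (3t)` bounds the change of `S` by `-s S(x) + (s/3) log s`, and the term `(s/3) log s`
dominates for small `s` (`not_min_of_boundary`). Hence every minimizer is an interior critical
point, that is, the centre, and `F_β` vanishes there.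
-/


/-- The spin value `v_k = (cos(2πk/3), sin(2πk/3))`. -/
noncomputable def potV (k : ℕ) : ℝ × ℝ :=
  (Real.cos (2 * Real.pi * k / 3), Real.sin (2 * Real.pi * k / 3))

/-- `ψ(x) = (2x₁+x₂−1)v₁ + (x₁+2x₂−1)v₂`. -/
noncomputable def potPsi (x : ℝ × ℝ) : ℝ × ℝ :=
  ((2 * x.1 + x.2 - 1) * (potV 1).1 + (x.1 + 2 * x.2 - 1) * (potV 2).1,
   (2 * x.1 + x.2 - 1) * (potV 1).2 + (x.1 + 2 * x.2 - 1) * (potV 2).2)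

/-- The entropy `S(x) = Σᵢ xᵢ log(3xᵢ)` with `x₀ = 1 − x₁ − x₂`
(the convention `t log t = 0` at `t = 0` holds since `Real.log 0 = 0`). -/
noncomputable def potS (x : ℝ × ℝ) : ℝ :=
  (1 - x.1 - x.2) * Real.log (3 * (1 - x.1 - x.2))
    + x.1 * Real.log (3 * x.1) + x.2 * Real.log (3 * x.2)

/-- The mean-field Potts potential `F_β(x) = −(1/2)|ψ(x)|² + (1/β)S(x)`. -/
noncomputable def potF (β : ℝ) (x : ℝ × ℝ) : ℝ :=
  - (1 / 2) * ((potPsi x).1 ^ 2 + (potPsi x).2 ^ 2) + (1 / β) * potS x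

/-- The open two-dimensional simplex `Ξ°`. -/
def simplexInt : Set (ℝ × ℝ) := {x | 0 < x.1 ∧ 0 < x.2 ∧ x.1 + x.2 < 1}

/-- `f₀(t) = (2/(3(1−3t))) log((1−2t)/t)` for `t ≠ 1/3`, with `f₀(1/3) = 2`. -/
noncomputable def f0 (t : ℝ) : ℝ :=
  if t = 1 / 3 then 2 else 2 / (3 * (1 - 3 * t)) * Real.log ((1 - 2 * t) / t)

lemma potF_eq (β : ℝ) (x : ℝ × ℝ) :
    potF β x = -(1 / 2) * ((2 * x.1 + x.2 - 1) ^ 2 + (x.1 + 2 * x.2 - 1) ^ 2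
      - (2 * x.1 + x.2 - 1) * (x.1 + 2 * x.2 - 1)) + (1 / β) * potS x := by
  have c1 : Real.cos (2 * Real.pi * (1 : ℕ) / 3) = -(1 / 2) := by
    rw [show 2 * Real.pi * (1 : ℕ) / 3 = Real.pi - Real.pi / 3 by push_cast; ring,
      Real.cos_pi_sub, Real.cos_pi_div_three]
  have s1 : Real.sin (2 * Real.pi * (1 : ℕ) / 3) = √3 / 2 := by
    rw [show 2 * Real.pi * (1 : ℕ) / 3 = Real.pi - Real.pi / 3 by push_cast; ring,
      Real.sin_pi_sub, Real.sin_pi_div_three]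
  have c2 : Real.cos (2 * Real.pi * (2 : ℕ) / 3) = -(1 / 2) := by
    rw [show 2 * Real.pi * (2 : ℕ) / 3 = Real.pi / 3 + Real.pi by push_cast; ring,
      Real.cos_add_pi, Real.cos_pi_div_three]
  have s2 : Real.sin (2 * Real.pi * (2 : ℕ) / 3) = -(√3 / 2) := by
    rw [show 2 * Real.pi * (2 : ℕ) / 3 = Real.pi / 3 + Real.pi by push_cast; ring,
      Real.sin_add_pi, Real.sin_pi_div_three]
  have h3 : √3 ^ 2 = (3 : ℝ) := Real.sq_sqrt (by norm_num)
  simp only [potF, potPsi, potV, c1, s1, c2, s2]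
  linear_combination (-(1 / 2) * (x.1 - x.2) ^ 2 / 4) * h3

lemma hasDerivAt_mul_log_three {t : ℝ} (ht : 0 < t) :
    HasDerivAt (fun u : ℝ => u * Real.log (3 * u)) (Real.log (3 * t) + 1) t := by
  have h3 : HasDerivAt (fun u : ℝ => 3 * u) 3 t := by
    simpa using (hasDerivAt_id t).const_mul (3 : ℝ)
  have h := (hasDerivAt_id' t).mul (h3.log (by positivity))
  exact h.congr_deriv (by field_simp)

/-- At an interior point with vanishing differential, the quantities `log xᵢ - (3β/2) xᵢ` agree. -/
lemma crit_eqs {β : ℝ} (hβ : 0 < β) {x : ℝ × ℝ} (hx : x ∈ simplexInt)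
    (h : fderiv ℝ (potF β) x = 0) :
    Real.log x.1 - 3 * β / 2 * x.1
        = Real.log (1 - x.1 - x.2) - 3 * β / 2 * (1 - x.1 - x.2) ∧
    Real.log x.2 - 3 * β / 2 * x.2
        = Real.log (1 - x.1 - x.2) - 3 * β / 2 * (1 - x.1 - x.2) := by
  obtain ⟨p, q⟩ := x
  obtain ⟨h1, h2, h12⟩ := hx
  simp only at h1 h2 h12 ⊢
  have h0 : 0 < 1 - p - q := by linarith
  have hd : DifferentiableAt ℝ (potF β) (p, q) := by
    have e : potF β = _ := funext (potF_eq β)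
    rw [e]
    unfold potS
    have e0 : 3 * (1 - (p, q).1 - (p, q).2) ≠ 0 := by simpa using h0.ne'
    have e1 : 3 * (p, q).1 ≠ 0 := by simpa using h1.ne'
    have e2 : 3 * (p, q).2 ≠ 0 := by simpa using h2.ne'
    fun_prop (disch := assumption)
  have hF : HasFDerivAt (potF β) (0 : ℝ × ℝ →L[ℝ] ℝ) (p, q) := h ▸ hd.hasFDerivAt
  have l0 := Real.log_mul (three_ne_zero : (3 : ℝ) ≠ 0) h0.ne'
  have l1 := Real.log_mul (three_ne_zero : (3 : ℝ) ≠ 0) h1.ne'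
  have l2 := Real.log_mul (three_ne_zero : (3 : ℝ) ≠ 0) h2.ne'
  constructor
  · have A : HasDerivAt (fun u : ℝ => potF β (u, q)) 0 p := by
      have hc : HasDerivAt (fun u : ℝ => (u, q)) ((1 : ℝ), (0 : ℝ)) p :=
        (hasDerivAt_id p).prodMk (hasDerivAt_const p q)
      exact hF.comp_hasDerivAt p hc
    have i0 : HasDerivAt (fun u : ℝ => 1 - u - q) (-1) p := by
      simpa using ((hasDerivAt_id p).const_sub 1).sub_const q
    have ia : HasDerivAt (fun u : ℝ => 2 * u + q - 1) 2 p := by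
      simpa using (((hasDerivAt_id p).const_mul (2 : ℝ)).add_const q).sub_const 1
    have ib : HasDerivAt (fun u : ℝ => u + 2 * q - 1) 1 p := by
      simpa using ((hasDerivAt_id p).add_const (2 * q)).sub_const 1
    have B := ((((ia.pow 2).add (ib.pow 2)).sub (ia.mul ib)).const_mul (-(1 / 2) : ℝ)).add
      (((((hasDerivAt_mul_log_three h0).comp p i0).add (hasDerivAt_mul_log_three h1)).add_const
        (q * Real.log (3 * q))).const_mul (1 / β))
    have C := A.unique (B.congr_of_eventuallyEq
      (Filter.Eventually.of_forall fun u => by simp [potF_eq, potS]))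
    rw [l0, l1] at C
    field_simp at C
    norm_num at C
    linarith
  · have A : HasDerivAt (fun u : ℝ => potF β (p, u)) 0 q := by
      have hc : HasDerivAt (fun u : ℝ => (p, u)) ((0 : ℝ), (1 : ℝ)) q :=
        (hasDerivAt_const q p).prodMk (hasDerivAt_id q)
      exact hF.comp_hasDerivAt q hc
    have i0 : HasDerivAt (fun u : ℝ => 1 - p - u) (-1) q := by
      simpa using (hasDerivAt_id q).const_sub (1 - p)
    have ia : HasDerivAt (fun u : ℝ => 2 * p + u - 1) 1 q := by
      simpa using ((hasDerivAt_id q).const_add (2 * p)).sub_const 1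
    have ib : HasDerivAt (fun u : ℝ => p + 2 * u - 1) 2 q := by
      simpa using (((hasDerivAt_id q).const_mul (2 : ℝ)).const_add p).sub_const 1
    have B := ((((ia.pow 2).add (ib.pow 2)).sub (ia.mul ib)).const_mul (-(1 / 2) : ℝ)).add
      (((((hasDerivAt_mul_log_three h0).comp q i0).add_const (p * Real.log (3 * p))).add
        (hasDerivAt_mul_log_three h2)).const_mul (1 / β))
    have C := A.unique (B.congr_of_eventuallyEq
      (Filter.Eventually.of_forall fun u => by simp [potF_eq, potS]))
    rw [l0, l2] at C
    field_simp at C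
    norm_num at C
    linarith

/-- A level of `log t - c t` contains no three ordered points: the slopes of `log` strictly
decrease. -/
lemma no_three_level {c a b d : ℝ} (ha : 0 < a) (hab : a < b) (hbd : b < d)
    (h1 : Real.log a - c * a = Real.log b - c * b)
    (h2 : Real.log d - c * d = Real.log b - c * b) : False := by
  have h := strictConcaveOn_log_Ioi.slope_anti_adjacent (Set.mem_Ioi.2 ha)
    (Set.mem_Ioi.2 (by linarith)) hab hbd
  have e1 : (Real.log b - Real.log a) / (b - a) = c := by
    rw [div_eq_iff (by linarith)]; linarith
  have e2 : (Real.log d - Real.log b) / (d - b) = c := by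
    rw [div_eq_iff (by linarith)]; linarith
  rw [e1, e2] at h
  exact lt_irrefl _ h

lemma two_eq_of_level {c a b d : ℝ} (ha : 0 < a) (hb : 0 < b) (hd : 0 < d)
    (h1 : Real.log a - c * a = Real.log d - c * d)
    (h2 : Real.log b - c * b = Real.log d - c * d) : a = b ∨ a = d ∨ b = d := by
  by_contra! hne
  obtain ⟨n1, n2, n3⟩ := hne
  rcases lt_or_gt_of_ne n1 with u | u <;> rcases lt_or_gt_of_ne n2 with v | v <;>
    rcases lt_or_gt_of_ne n3 with w | w
  · exact no_three_level (c := c) ha u w (by linarith) (by linarith)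
  · exact no_three_level (c := c) ha v w (by linarith) (by linarith)
  · linarith
  · exact no_three_level (c := c) hd v u (by linarith) (by linarith)
  · exact no_three_level (c := c) hb u v (by linarith) (by linarith)
  · linarith
  · exact no_three_level (c := c) hb w v (by linarith) (by linarith)
  · exact no_three_level (c := c) hd w u (by linarith) (by linarith)

lemma eq_third_of_pair {β t : ℝ} (hf : ∀ t ∈ Set.Ioo (0 : ℝ) (1 / 2), β < f0 t)
    (ht : 0 < t) (ht' : t < 1 / 2)
    (h : Real.log t - 3 * β / 2 * t = Real.log (1 - 2 * t) - 3 * β / 2 * (1 - 2 * t)) :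
    t = 1 / 3 := by
  by_contra hne
  have hlt := hf t ⟨ht, ht'⟩
  have hne' : 1 - 3 * t ≠ 0 := fun e => hne (by linarith)
  rw [f0, if_neg hne, Real.log_div (by linarith) ht.ne',
    show Real.log (1 - 2 * t) - Real.log t = 3 * β / 2 * (1 - 3 * t) by linarith] at hlt
  have : 2 / (3 * (1 - 3 * t)) * (3 * β / 2 * (1 - 3 * t)) = β := by field_simp
  linarith

lemma eq_center_of_fderiv {β : ℝ} (hβ : 0 < β)
    (hf : ∀ t ∈ Set.Ioo (0 : ℝ) (1 / 2), β < f0 t) {x : ℝ × ℝ} (hx : x ∈ simplexInt)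
    (h : fderiv ℝ (potF β) x = 0) : x = (1 / 3, 1 / 3) := by
  obtain ⟨e1, e2⟩ := crit_eqs hβ hx h
  obtain ⟨p, q⟩ := x
  obtain ⟨h1, h2, h12⟩ := hx
  simp only at h1 h2 h12 e1 e2
  have h0 : 0 < 1 - p - q := by linarith
  rcases two_eq_of_level h1 h2 h0 e1 e2 with k | k | k
  · subst k
    rw [show 1 - p - p = 1 - 2 * p by ring] at e1
    have := eq_third_of_pair hf h1 (by linarith) e1
    rw [this]
  · obtain rfl : q = 1 - 2 * p := by linarith
    rw [show 1 - p - (1 - 2 * p) = p by ring] at e2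
    have := eq_third_of_pair hf h1 (by linarith) e2.symm
    rw [this]; norm_num
  · obtain rfl : p = 1 - 2 * q := by linarith
    rw [show 1 - (1 - 2 * q) - q = q by ring] at e1
    have := eq_third_of_pair hf h2 (by linarith) e1.symm
    rw [this]; norm_num

lemma continuous_mul_log_three : Continuous fun t : ℝ => t * Real.log (3 * t) := by
  have h : Continuous fun t : ℝ => (1 / 3) * ((3 * t) * Real.log (3 * t)) :=
    continuous_const.mul (Real.continuous_mul_log.comp (continuous_const.mul continuous_id))
  convert h using 2
  ring

lemma continuous_potF (β : ℝ) : Continuous (potF β) := by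
  have e : potF β = _ := funext (potF_eq β)
  have hS : Continuous potS :=
    ((continuous_mul_log_three.comp (by fun_prop : Continuous fun x : ℝ × ℝ =>
      1 - x.1 - x.2)).add (continuous_mul_log_three.comp continuous_fst)).add
      (continuous_mul_log_three.comp continuous_snd)
  rw [e]
  fun_prop

/-- Convexity of `t log (3t)` between `t` and its zero `1/3`. -/
lemma mul_log_three_convex {t s : ℝ} (ht : 0 ≤ t) (hs : 0 ≤ s) (hs1 : s ≤ 1) :
    ((1 - s) * t + s / 3) * Real.log (3 * ((1 - s) * t + s / 3))
      ≤ (1 - s) * (t * Real.log (3 * t)) := by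
  have h := Real.convexOn_mul_log.2 (Set.mem_Ici.2 (by linarith : 0 ≤ 3 * t))
    (Set.mem_Ici.2 (zero_le_one (α := ℝ))) (sub_nonneg.2 hs1) hs (by ring)
  simp only [smul_eq_mul, Real.log_one, mul_zero, mul_one, add_zero] at h
  rw [show 3 * ((1 - s) * t + s / 3) = (1 - s) * (3 * t) + s by ring]
  nlinarith

/-- A boundary point of the simplex is not a minimizer: moving slightly towards the centre strictly
decreases `F_β`, because `t log t` has infinite slope at `0`. -/
lemma not_min_of_boundary {β : ℝ} (hβ : 0 < β) {x : ℝ × ℝ} (h1 : 0 ≤ x.1) (h2 : 0 ≤ x.2)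
    (h12 : x.1 + x.2 ≤ 1) (hb : x.1 = 0 ∨ x.2 = 0 ∨ 1 - x.1 - x.2 = 0) :
    ∃ y : ℝ × ℝ, 0 ≤ y.1 ∧ 0 ≤ y.2 ∧ y.1 + y.2 ≤ 1 ∧ potF β y < potF β x := by
  obtain ⟨p, q⟩ := x
  simp only at h1 h2 h12 hb
  set Q := (2 * p + q - 1) ^ 2 + (p + 2 * q - 1) ^ 2 - (2 * p + q - 1) * (p + 2 * q - 1) with hQ
  have hQ0 : 0 ≤ Q := by
    nlinarith [sq_nonneg ((2 * p + q - 1) - (p + 2 * q - 1)), sq_nonneg (2 * p + q - 1),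
      sq_nonneg (p + 2 * q - 1)]
  -- With `log s = -K`, the gain `(s/3) K` exceeds `s (β Q - S(x))`, which bounds the other changes
  -- of `β F_β`.
  set K := 1 + 3 * |potS (p, q)| + 3 * (β * Q) with hK
  have hK0 : 0 < K := by positivity
  set s := Real.exp (-K) with hs
  have hs0 : 0 < s := Real.exp_pos _
  have hs1 : s ≤ 1 := Real.exp_le_one_iff.2 (by linarith)
  have hlog : Real.log s = -K := Real.log_exp _
  refine ⟨((1 - s) * p + s / 3, (1 - s) * q + s / 3), ?_, ?_, ?_, ?_⟩
  · have := mul_nonneg (sub_nonneg.2 hs1) h1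
    simp only; linarith
  · have := mul_nonneg (sub_nonneg.2 hs1) h2
    simp only; linarith
  · simp only; nlinarith
  have key : potS ((1 - s) * p + s / 3, (1 - s) * q + s / 3)
      ≤ (1 - s) * potS (p, q) - s / 3 * K := by
    have r : 1 - ((1 - s) * p + s / 3) - ((1 - s) * q + s / 3)
        = (1 - s) * (1 - p - q) + s / 3 := by ring
    have m0 := mul_log_three_convex (sub_nonneg.2 (show q ≤ 1 - p by linarith)) hs0.le hs1
    have m1 := mul_log_three_convex h1 hs0.le hs1
    have m2 := mul_log_three_convex h2 hs0.le hs1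
    have z : ∀ t : ℝ, t = 0 → ((1 - s) * t + s / 3) * Real.log (3 * ((1 - s) * t + s / 3))
        = (1 - s) * (t * Real.log (3 * t)) - s / 3 * K := by
      rintro t rfl
      rw [show 3 * ((1 - s) * 0 + s / 3) = s by ring, hlog]
      ring
    simp only [potS, r]
    rcases hb with b | b | b <;> have := z _ b <;> linarith
  rw [potF_eq, potF_eq]
  simp only
  have hq : (2 * ((1 - s) * p + s / 3) + ((1 - s) * q + s / 3) - 1) ^ 2
      + ((1 - s) * p + s / 3 + 2 * ((1 - s) * q + s / 3) - 1) ^ 2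
      - (2 * ((1 - s) * p + s / 3) + ((1 - s) * q + s / 3) - 1)
        * ((1 - s) * p + s / 3 + 2 * ((1 - s) * q + s / 3) - 1) = (1 - s) ^ 2 * Q := by
    rw [hQ]; ring
  rw [hq]
  have key2 : potS ((1 - s) * p + s / 3, (1 - s) * q + s / 3)
      < potS (p, q) - β * (s * Q) := by
    have a := neg_abs_le (potS (p, q))
    have : 0 < s * (potS (p, q) + K / 3 - β * Q) := by
      apply mul_pos hs0
      rw [hK]; linarith
    linarith
  have key3 := mul_lt_mul_of_pos_left key2 (one_div_pos.2 hβ)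
  have e : 1 / β * (potS (p, q) - β * (s * Q)) = 1 / β * potS (p, q) - s * Q := by
    field_simp
  rw [e] at key3
  have := mul_nonneg (sq_nonneg s) hQ0
  nlinarith

lemma eq_center_of_min {β : ℝ} (hβ : 0 < β)
    (hf : ∀ t ∈ Set.Ioo (0 : ℝ) (1 / 2), β < f0 t) {x : ℝ × ℝ} (h1 : 0 ≤ x.1) (h2 : 0 ≤ x.2)
    (h12 : x.1 + x.2 ≤ 1)
    (hm : ∀ y : ℝ × ℝ, 0 ≤ y.1 → 0 ≤ y.2 → y.1 + y.2 ≤ 1 → potF β x ≤ potF β y) :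
    x = (1 / 3, 1 / 3) := by
  by_cases hb : x.1 = 0 ∨ x.2 = 0 ∨ 1 - x.1 - x.2 = 0
  · obtain ⟨y, y1, y2, y3, hy⟩ := not_min_of_boundary hβ h1 h2 h12 hb
    exact absurd (hm y y1 y2 y3) (not_le.2 hy)
  · push Not at hb
    obtain ⟨b1, b2, b3⟩ := hb
    have hx : x ∈ simplexInt := ⟨lt_of_le_of_ne h1 b1.symm, lt_of_le_of_ne h2 b2.symm,
      lt_of_le_of_ne h12 fun e => b3 (by linarith)⟩
    have ho : IsOpen simplexInt :=
      (isOpen_lt continuous_const continuous_fst).inter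
        ((isOpen_lt continuous_const continuous_snd).inter
          (isOpen_lt (continuous_fst.add continuous_snd) continuous_const))
    have hl : IsLocalMin (potF β) x := by
      filter_upwards [ho.mem_nhds hx] with y hy
      exact hm y hy.1.le hy.2.1.le hy.2.2.le
    exact eq_center_of_fderiv hβ hf hx hl.fderiv_eq_zero

lemma potF_center (β : ℝ) : potF β (1 / 3, 1 / 3) = 0 := by
  rw [potF_eq, potS]
  norm_num

lemma exists_min (β : ℝ) : ∃ x : ℝ × ℝ, 0 ≤ x.1 ∧ 0 ≤ x.2 ∧ x.1 + x.2 ≤ 1 ∧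
    ∀ y : ℝ × ℝ, 0 ≤ y.1 → 0 ≤ y.2 → y.1 + y.2 ≤ 1 → potF β x ≤ potF β y := by
  have hc : IsClosed {x : ℝ × ℝ | 0 ≤ x.1 ∧ 0 ≤ x.2 ∧ x.1 + x.2 ≤ 1} :=
    (isClosed_le continuous_const continuous_fst).inter
      ((isClosed_le continuous_const continuous_snd).inter
        (isClosed_le (continuous_fst.add continuous_snd) continuous_const))
  have hk : IsCompact {x : ℝ × ℝ | 0 ≤ x.1 ∧ 0 ≤ x.2 ∧ x.1 + x.2 ≤ 1} :=
    (isCompact_Icc (a := ((0 : ℝ), (0 : ℝ))) (b := ((1 : ℝ), (1 : ℝ)))).of_isClosed_subset hc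
      fun x hx => ⟨⟨hx.1, hx.2.1⟩, ⟨by linarith [hx.1, hx.2.1, hx.2.2],
        by linarith [hx.1, hx.2.1, hx.2.2]⟩⟩
  obtain ⟨x, hx, hm⟩ := hk.exists_isMinOn ⟨(0, 0), by simp⟩ (continuous_potF β).continuousOn
  exact ⟨x, hx.1, hx.2.1, hx.2.2, fun y y1 y2 y3 => hm (show y ∈ _ from ⟨y1, y2, y3⟩)⟩

/-- if `f₀(t) > β` for all `t ∈ (0,1/2)`, then `(1/3,1/3)` is the unique
critical point of `F_β` in `Ξ°` and the strict global minimum of `F_β` on the closed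
simplex, with `F_β(1/3,1/3) = 0`. -/
theorem potts_unique_critical_point_high_temperature (β : ℝ) (hβ : 0 < β)
    (hf : ∀ t ∈ Set.Ioo (0 : ℝ) (1 / 2), β < f0 t) :
    (∀ x ∈ simplexInt, fderiv ℝ (potF β) x = 0 → x = (1 / 3, 1 / 3)) ∧
    potF β (1 / 3, 1 / 3) = 0 ∧
    (∀ x : ℝ × ℝ, 0 ≤ x.1 → 0 ≤ x.2 → x.1 + x.2 ≤ 1 → x ≠ (1 / 3, 1 / 3) →
      0 < potF β x) := by
  refine ⟨fun x hx h => eq_center_of_fderiv hβ hf hx h, potF_center β, fun x h1 h2 h12 hne => ?_⟩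
  obtain ⟨m, m1, m2, m3, hm⟩ := exists_min β
  have hmc := eq_center_of_min hβ hf m1 m2 m3 hm
  rw [hmc, potF_center] at hm
  refine lt_of_le_of_ne (hm x h1 h2 h12) fun e => hne ?_
  exact eq_center_of_min hβ hf h1 h2 h12 (by rw [← e]; exact hm)
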